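/- The kneading group K is not residually finite: there exists g ∈ K with g ≠ 1 such that φ(g) = 1 for every group homomorphism φ from K to any finite group. -/

import Mathlib

/-- States of the kneading automaton: `a i` is the paper's `a_{i+1}` (for `i < k`),
`b i` is the paper's `b_{i+1}` (for `i < p`), and `id` is the identity state. -/
inductive KState : Type
  | a (i : ℕ)
  | b (i : ℕ)
  | id
  deriving DecidableEq

/-- Transition function of the kneading automaton `𝒦(x₁…x_k, y₁…y_p)`, where the paper's
`x_i` is `x (i-1)` and `y_i` is `y (i-1)`.  `KTrans k p x y s z = (output letter, restriction)`. -/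
def KTrans (k p : ℕ) (x y : ℕ → ℤ) : KState → ℤ → ℤ × KState
  | .a 0, z => (z + 1, .id)
  | .a (i+1), z => if z = x i then (z, .a i) else (z, .id)
  | .b 0, z =>
      if z = x (k-1) then (z, .a (k-1))
      else if z = y (p-1) then (z, .b (p-1))
      else (z, .id)
  | .b (i+1), z => if z = y i then (z, .b i) else (z, .id)
  | .id, z => (z, .id)

/-- The action of a state on the tree `ℤ*` of finite words over `ℤ`,
defined recursively by `q(zv) = q(z)·(q|_z)(v)`. -/
def stateAct (k p : ℕ) (x y : ℕ → ℤ) : KState → List ℤ → List ℤ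
  | _, [] => []
  | s, z :: v => (KTrans k p x y s z).1 :: stateAct k p x y (KTrans k p x y s z).2 v

/-- The generating states `S = {a₁,…,a_k, b₁,…,b_p}`. -/
def IsGen (k p : ℕ) (s : KState) : Prop :=
  (∃ i, i < k ∧ s = .a i) ∨ (∃ j, j < p ∧ s = .b j)

/-- The generators of the kneading group, as permutations of `List ℤ` whose underlying
function is the action of a generating state. -/
def SGens (k p : ℕ) (x y : ℕ → ℤ) : Set (Equiv.Perm (List ℤ)) :=
  {g | ∃ s : KState, IsGen k p s ∧ ⇑g = stateAct k p x y s}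

/-- The kneading group `K = 𝕂(x₁…x_k, y₁…y_p)`. -/
def Kgroup (k p : ℕ) (x y : ℕ → ℤ) : Subgroup (Equiv.Perm (List ℤ)) :=
  Subgroup.closure (SGens k p x y)

theorem stateAct_id (k p : ℕ) (x y : ℕ → ℤ) (v : List ℤ) :
    stateAct k p x y .id v = v := by
  induction v with
  | nil => rfl
  | cons z v ih => simp [stateAct, KTrans, ih]

theorem KTrans_fst (k p : ℕ) (x y : ℕ → ℤ) (s : KState) (hs : s ≠ .a 0) (z : ℤ) :
    (KTrans k p x y s z).1 = z := by
  rcases s with (_ | i) | (_ | i) | _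
  · exact absurd rfl hs
  all_goals
    simp only [KTrans]
    try split_ifs
    all_goals rfl

theorem KTrans_a0 (k p : ℕ) (x y : ℕ → ℤ) (z : ℤ) :
    KTrans k p x y (.a 0) z = (z + 1, .id) := rfl

theorem stateAct_inj (k p : ℕ) (x y : ℕ → ℤ) (v : List ℤ) :
    ∀ (s : KState) (w : List ℤ), stateAct k p x y s v = stateAct k p x y s w → v = w := by
  induction v with
  | nil =>
    intro s w h
    cases w with
    | nil => rfl
    | cons z w => simp [stateAct] at h
  | cons z v ih =>
    intro s w h
    cases w with
    | nil => simp [stateAct] at h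
    | cons z' w =>
      simp only [stateAct, List.cons.injEq] at h
      have hz : z = z' := by
        by_cases hs : s = .a 0
        · subst hs
          have := h.1
          simp only [KTrans_a0] at this
          omega
        · have := h.1
          rwa [KTrans_fst _ _ _ _ _ hs, KTrans_fst _ _ _ _ _ hs] at this
      subst hz
      rw [ih _ _ h.2]

theorem stateAct_surj (k p : ℕ) (x y : ℕ → ℤ) (v : List ℤ) :
    ∀ (s : KState), ∃ w, stateAct k p x y s w = v := by
  induction v with
  | nil => intro s; exact ⟨[], rfl⟩
  | cons z v ih =>
    intro s
    have hz : ∃ z', (KTrans k p x y s z').1 = z := by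
      by_cases hs : s = .a 0
      · subst hs
        exact ⟨z - 1, by simp [KTrans_a0]⟩
      · exact ⟨z, KTrans_fst _ _ _ _ _ hs z⟩
    obtain ⟨z', hz'⟩ := hz
    obtain ⟨w, hw⟩ := ih (KTrans k p x y s z').2
    exact ⟨z' :: w, by simp [stateAct, hz', hw]⟩

/-- The permutation of words induced by a state. -/
noncomputable def statePerm (k p : ℕ) (x y : ℕ → ℤ) (s : KState) : Equiv.Perm (List ℤ) :=
  Equiv.ofBijective (stateAct k p x y s)
    ⟨fun v w h => stateAct_inj k p x y v s w h, fun v => stateAct_surj k p x y v s⟩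

theorem statePerm_apply (k p : ℕ) (x y : ℕ → ℤ) (s : KState) (v : List ℤ) :
    statePerm k p x y s v = stateAct k p x y s v := rfl

theorem statePerm_mem (k p : ℕ) (x y : ℕ → ℤ) (s : KState) (hs : IsGen k p s) :
    statePerm k p x y s ∈ Kgroup k p x y :=
  Subgroup.subset_closure ⟨s, hs, rfl⟩

/-- `g` fixes the first letter of every word and acts trivially below letters outside `A`. -/
def SuppIn (g : Equiv.Perm (List ℤ)) (A : Set ℤ) : Prop :=
  g [] = [] ∧ ∀ z v, (∃ w, g (z :: v) = z :: w) ∧ (z ∉ A → g (z :: v) = z :: v)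

theorem SuppIn.commute {g h : Equiv.Perm (List ℤ)} {A B : Set ℤ} (hg : SuppIn g A)
    (hh : SuppIn h B) (hAB : ∀ z, z ∈ A → z ∉ B) : g * h = h * g := by
  ext1 v
  simp only [Equiv.Perm.mul_apply]
  cases v with
  | nil => rw [hg.1, hh.1, hg.1]
  | cons z v =>
    by_cases hz : z ∈ A
    · obtain ⟨w, hw⟩ := (hg.2 z v).1
      rw [(hh.2 z v).2 (hAB z hz), hw, (hh.2 z w).2 (hAB z hz)]
    · obtain ⟨w, hw⟩ := (hh.2 z v).1
      rw [(hg.2 z v).2 hz, hw, (hg.2 z w).2 hz]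

theorem shift_nil (k p : ℕ) (x y : ℕ → ℤ) (n : ℤ) :
    (statePerm k p x y (.a 0) ^ n) [] = [] := by
  apply Equiv.Perm.zpow_apply_eq_self_of_apply_eq_self
  rfl

theorem shift_cons (k p : ℕ) (x y : ℕ → ℤ) (n : ℤ) :
    ∀ (z : ℤ) (v : List ℤ), (statePerm k p x y (.a 0) ^ n) (z :: v) = (z + n) :: v := by
  have h1 : ∀ (z : ℤ) (v : List ℤ), statePerm k p x y (.a 0) (z :: v) = (z + 1) :: v := by
    intro z v
    simp [statePerm_apply, stateAct, KTrans_a0, stateAct_id]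
  induction n with
  | zero => intro z v; simp
  | succ n ih =>
    intro z v
    rw [zpow_add_one, Equiv.Perm.mul_apply, h1, ih]
    congr 1; ring
  | pred n ih =>
    intro z v
    have h2 : (statePerm k p x y (.a 0))⁻¹ (z :: v) = (z - 1) :: v := by
      rw [Equiv.Perm.inv_eq_iff_eq, h1]; simp
    rw [zpow_sub_one, Equiv.Perm.mul_apply, h2, ih]
    congr 1; ring

theorem SuppIn.conj {g : Equiv.Perm (List ℤ)} {A : Set ℤ} (hg : SuppIn g A)
    (k p : ℕ) (x y : ℕ → ℤ) (n : ℤ) :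
    SuppIn (statePerm k p x y (.a 0) ^ n * g * statePerm k p x y (.a 0) ^ (-n))
      {z | z - n ∈ A} := by
  refine ⟨?_, fun z v => ⟨?_, fun hz => ?_⟩⟩
  · simp only [Equiv.Perm.mul_apply, shift_nil, hg.1]
  · obtain ⟨w, hw⟩ := (hg.2 (z + -n) v).1
    refine ⟨w, ?_⟩
    simp only [Equiv.Perm.mul_apply, shift_cons, hw]
    congr 1; ring
  · simp only [Equiv.Perm.mul_apply, shift_cons]
    rw [(hg.2 (z + -n) v).2 (by simpa [sub_eq_add_neg] using hz), shift_cons]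
    congr 1; ring

/-- Any state other than `a₁` is finitely supported on the first level. -/
theorem statePerm_supp (k p : ℕ) (x y : ℕ → ℤ) (s : KState) (hs : s ≠ .a 0) :
    ∃ D : ℤ, SuppIn (statePerm k p x y s) {z | |z| ≤ D} := by
  have key : ∃ D : ℤ, ∀ z, ¬ |z| ≤ D → (KTrans k p x y s z).2 = .id := by
    rcases s with (_ | i) | (_ | i) | _
    · exact absurd rfl hs
    · refine ⟨|x i|, fun z hz => ?_⟩
      have : z ≠ x i := by rintro rfl; exact hz le_rfl
      simp [KTrans, this]
    · refine ⟨max |x (k-1)| |y (p-1)|, fun z hz => ?_⟩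
      have h1 : z ≠ x (k-1) := by rintro rfl; exact hz (le_max_left _ _)
      have h2 : z ≠ y (p-1) := by rintro rfl; exact hz (le_max_right _ _)
      simp [KTrans, h1, h2]
    · refine ⟨|y i|, fun z hz => ?_⟩
      have : z ≠ y i := by rintro rfl; exact hz le_rfl
      simp [KTrans, this]
    · exact ⟨0, fun z _ => rfl⟩
  obtain ⟨D, hD⟩ := key
  refine ⟨D, rfl, fun z v => ⟨?_, fun hz => ?_⟩⟩
  · exact ⟨_, by rw [statePerm_apply, stateAct, KTrans_fst _ _ _ _ _ hs]⟩
  · rw [statePerm_apply, stateAct, KTrans_fst _ _ _ _ _ hs, hD z hz, stateAct_id]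

/-- Every state `a_i` acts nontrivially. -/
theorem a_nontrivial (k p : ℕ) (x y : ℕ → ℤ) (i : ℕ) :
    ∃ w, stateAct k p x y (.a i) w ≠ w := by
  induction i with
  | zero => exact ⟨[0], by simp [stateAct, KTrans_a0]⟩
  | succ i ih =>
    obtain ⟨w, hw⟩ := ih
    exact ⟨x i :: w, by simpa [stateAct, KTrans] using hw⟩

/-- `a₁` and `b₁` do not commute. -/
theorem a_b_noncomm (k p : ℕ) (x y : ℕ → ℤ) :
    ∃ w, stateAct k p x y (.a 0) (stateAct k p x y (.b 0) w) ≠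
      stateAct k p x y (.b 0) (stateAct k p x y (.a 0) w) := by
  obtain ⟨w, hw⟩ := a_nontrivial k p x y (k - 1)
  by_cases h : x (k - 1) + 1 = y (p - 1)
  · refine ⟨(x (k - 1) - 1) :: w, ?_⟩
    have h2 : x (k - 1) - 1 ≠ y (p - 1) := by omega
    simpa [stateAct, KTrans, stateAct_id, h2] using fun h => hw h.symm
  · refine ⟨x (k - 1) :: w, ?_⟩
    simpa [stateAct, KTrans, stateAct_id, h] using hw

theorem stmt11 (k p : ℕ) (hk : 1 ≤ k) (hp : 1 ≤ p) (x y : ℕ → ℤ)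
    (hxy : x (k - 1) ≠ y (p - 1)) :
    ∃ g : ↥(Kgroup k p x y), g ≠ 1 ∧
      ∀ (F : Type) [Group F] [Finite F] (φ : ↥(Kgroup k p x y) →* F), φ g = 1 := by
  -- a generator restricting to `a₁`
  have h1 : ∃ s u, IsGen k p s ∧ s ≠ .a 0 ∧ KTrans k p x y s u = (u, .a 0) := by
    by_cases h : k = 1
    · subst h
      exact ⟨.b 0, x 0, Or.inr ⟨0, hp, rfl⟩, by simp, by simp [KTrans]⟩
    · exact ⟨.a 1, x 0, Or.inl ⟨1, by omega, rfl⟩, by simp, by simp [KTrans]⟩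
  -- a generator restricting to `b₁`
  have h2 : ∃ s u, IsGen k p s ∧ s ≠ .a 0 ∧ KTrans k p x y s u = (u, .b 0) := by
    by_cases h : p = 1
    · subst h
      exact ⟨.b 0, y 0, Or.inr ⟨0, hp, rfl⟩, by simp, by
        have : y 0 ≠ x (k - 1) := fun h => hxy h.symm
        simp [KTrans, this]⟩
    · exact ⟨.b 1, y 0, Or.inr ⟨1, by omega, rfl⟩, by simp, by simp [KTrans]⟩
  obtain ⟨s, u, hsG, hs0, hsu⟩ := h1
  obtain ⟨t, v, htG, ht0, htv⟩ := h2
  let A : Kgroup k p x y := ⟨statePerm k p x y (.a 0), statePerm_mem _ _ _ _ _ (Or.inl ⟨0, hk, rfl⟩)⟩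
  let g : Kgroup k p x y := ⟨statePerm k p x y s, statePerm_mem _ _ _ _ _ hsG⟩
  let t' : Kgroup k p x y := ⟨statePerm k p x y t, statePerm_mem _ _ _ _ _ htG⟩
  let h : Kgroup k p x y := A ^ (u - v) * t' * A ^ (-(u - v))
  obtain ⟨D, hD⟩ := statePerm_supp k p x y s hs0
  obtain ⟨E, hE⟩ := statePerm_supp k p x y t ht0
  have hE' := hE.conj k p x y (u - v)
  refine ⟨g * h * g⁻¹ * h⁻¹, ?_, ?_⟩
  · intro hc
    have hc' : g * h = h * g := by
      rw [mul_inv_eq_one, mul_inv_eq_iff_eq_mul] at hc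
      exact hc
    obtain ⟨w, hw⟩ := a_b_noncomm k p x y
    have hgu : ∀ w, g.1 (u :: w) = u :: stateAct k p x y (.a 0) w := by
      intro w
      change statePerm k p x y s (u :: w) = _
      rw [statePerm_apply, stateAct, hsu]
    have hhu : ∀ w, h.1 (u :: w) = u :: stateAct k p x y (.b 0) w := by
      intro w
      change (statePerm k p x y (.a 0) ^ (u - v) * statePerm k p x y t *
        statePerm k p x y (.a 0) ^ (-(u - v))) (u :: w) = _
      simp only [Equiv.Perm.mul_apply, shift_cons]
      rw [show u + -(u - v) = v by ring, statePerm_apply, stateAct, htv, shift_cons]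
      congr 1; ring
    have := congrArg (fun q : Kgroup k p x y => q.1 (u :: w)) hc'
    simp only [Subgroup.coe_mul, Equiv.Perm.mul_apply, hgu, hhu, List.cons.injEq, true_and] at this
    exact hw this
  · intro F _ _ φ
    let M : ℕ := (|D| + |E| + |u - v| + 1).toNat
    let N : ℤ := ((Nat.card F * M : ℕ) : ℤ)
    have hN : |D| + |E| + |u - v| < N := by
      have h1 : (M : ℤ) = |D| + |E| + |u - v| + 1 := Int.toNat_of_nonneg (by positivity)
      have h2 : M ≤ Nat.card F * M := Nat.le_mul_of_pos_left _ Nat.card_pos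
      have h3 : (M : ℤ) ≤ N := Int.ofNat_le.mpr h2
      omega
    have hφ : φ (A ^ N) = 1 := by
      rw [map_zpow, zpow_natCast, pow_mul, pow_card_eq_one', one_pow]
    have hcomm : (A ^ N * g * A ^ (-N)) * h = h * (A ^ N * g * A ^ (-N)) := by
      apply Subtype.ext
      refine (hD.conj k p x y N).commute hE' ?_
      intro z hz hz'
      simp only [Set.mem_setOf_eq] at hz hz'
      rw [abs_le] at hz hz'
      have := le_abs_self D
      have := le_abs_self E
      have := le_abs_self (u - v)
      omega
    have := congrArg φ hcomm
    simp only [map_mul, zpow_neg, map_inv, hφ, inv_one, one_mul, mul_one] at this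
    have h4 : φ g * φ h = φ h * φ g := by
      simpa only [map_mul, zpow_neg, map_inv] using this
    simp only [map_mul φ (g * h * g⁻¹), map_mul φ (g * h), map_mul φ g h, map_inv]
    rw [h4]; group
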